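/- Let $U \subseteq \mathbb{C}^{n-1} \times \mathbb{C}$ be an open set star-shaped in the last variable (i.e., if $(z', z_n) \in U$ then $(z', t z_n) \in U$ for all $t \in [0,1]$), and let $a : U \to \mathbb{C}$ be a smooth function with $a(z', 0) = 0$ whenever $(z',0) \in U$. Then there exist smooth functions $A, B : U \to \mathbb{C}$ such that $a(z', z_n) = A(z', z_n)\, z_n + B(z', z_n)\, \bar z_n$ for all $(z', z_n) \in U$. -/

import Mathlib

open Set

open MeasureTheory Filter Topology in
lemma aux_bound {E G : Type} [NormedAddCommGroup E] [NormedAddCommGroup G]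
    {U : Set E} {V : Set (E × ℝ)} (hV : IsOpen V)
    (hUV : ∀ p ∈ U, ∀ t ∈ Icc (0:ℝ) 1, (p, t) ∈ V) {F : E × ℝ → G} (hF : ContinuousOn F V)
    {p : E} (hp : p ∈ U) :
    ∃ C : ℝ, ∃ s ∈ 𝓝 p, ∀ x ∈ s, ∀ t ∈ Icc (0:ℝ) 1, (x, t) ∈ V ∧ ‖F (x, t)‖ ≤ C := by
  have hK : IsCompact (({p} : Set E) ×ˢ Icc (0:ℝ) 1) := isCompact_singleton.prod isCompact_Icc
  have hKV : (({p} : Set E) ×ˢ Icc (0:ℝ) 1) ⊆ V := by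
    rintro ⟨x, t⟩ ⟨hx, ht⟩
    simp only [mem_singleton_iff] at hx
    subst hx
    exact hUV _ hp t ht
  obtain ⟨C, hC⟩ := hK.exists_bound_of_continuousOn (hF.mono hKV)
  have hN : IsOpen (V ∩ (fun q => ‖F q‖) ⁻¹' Iio (C + 1)) :=
    hF.norm.isOpen_inter_preimage hV isOpen_Iio
  obtain ⟨u, v, hu, hv, hpu, htv, huv⟩ := generalized_tube_lemma
    (isCompact_singleton (x := p)) (isCompact_Icc (a := (0:ℝ)) (b := 1)) hN
    (fun q hq => ⟨hKV hq, lt_of_le_of_lt (hC q hq) (lt_add_one C)⟩)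
  refine ⟨C + 1, u, hu.mem_nhds (hpu rfl), fun x hx t ht => ?_⟩
  have := huv (mk_mem_prod hx (htv ht))
  exact ⟨this.1, le_of_lt this.2⟩

lemma aux_slice {E G : Type} [NormedAddCommGroup E] [NormedAddCommGroup G]
    {V : Set (E × ℝ)} {F : E × ℝ → G} (hF : ContinuousOn F V) {x : E}
    (hx : ∀ t ∈ Icc (0:ℝ) 1, (x, t) ∈ V) : ContinuousOn (fun t => F (x, t)) (Icc (0:ℝ) 1) :=
  hF.comp (by fun_prop) hx

lemma aux_uIoc {t : ℝ} (ht : t ∈ uIoc (0:ℝ) 1) : t ∈ Icc (0:ℝ) 1 := by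
  rw [uIoc_of_le zero_le_one] at ht
  exact Ioc_subset_Icc_self ht

open MeasureTheory in
lemma aux_meas {G : Type} [NormedAddCommGroup G]
    {f : ℝ → G} (hf : ContinuousOn f (Icc (0:ℝ) 1)) :
    AEStronglyMeasurable f (volume.restrict (uIoc (0:ℝ) 1)) :=
  (hf.mono fun _ h => aux_uIoc h).aestronglyMeasurable measurableSet_uIoc

open MeasureTheory Filter Topology in
lemma aux_contDiff (n : ℕ) {E : Type} [NormedAddCommGroup E] [NormedSpace ℝ E]
    {U : Set E} {V : Set (E × ℝ)} (hU : IsOpen U) (hV : IsOpen V)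
    (hUV : ∀ p ∈ U, ∀ t ∈ Icc (0:ℝ) 1, (p, t) ∈ V) :
    ∀ {G : Type} [NormedAddCommGroup G] [NormedSpace ℝ G] {F : E × ℝ → G},
      ContDiffOn ℝ n F V → ContDiffOn ℝ n (fun p => ∫ t in (0:ℝ)..1, F (p, t)) U := by
  induction n with
  | zero =>
    intro G _ _ F hF
    simp only [CharP.cast_eq_zero, contDiffOn_zero] at hF ⊢
    intro p hp
    obtain ⟨C, s, hs, hsC⟩ := aux_bound hV hUV hF hp
    refine ContinuousAt.continuousWithinAt ?_
    refine intervalIntegral.continuousAt_of_dominated_interval (bound := fun _ => C) ?_ ?_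
      intervalIntegrable_const ?_
    · filter_upwards [hs] with x hx
      exact aux_meas (aux_slice hF fun t ht => (hsC x hx t ht).1)
    · filter_upwards [hs] with x hx
      exact Eventually.of_forall fun t ht => (hsC x hx t (aux_uIoc ht)).2
    · refine Eventually.of_forall fun t ht => ?_
      have h1 : ContinuousAt F (p, t) :=
        hF.continuousAt (hV.mem_nhds (hUV p hp t (aux_uIoc ht)))
      exact ContinuousAt.comp (f := fun x => (x, t)) h1 (by fun_prop)
  | succ n ih =>
    intro G _ _ F hF
    push_cast at hF ⊢
    have hF0 : ContinuousOn F V := hF.continuousOn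
    obtain ⟨hd, -, hF'⟩ := (contDiffOn_succ_iff_fderiv_of_isOpen hV).1 hF
    let F' : E × ℝ → E →L[ℝ] G := fun q => (fderiv ℝ F q).comp (ContinuousLinearMap.inl ℝ E ℝ)
    have hF'' : ContDiffOn ℝ n F' V := hF'.clm_comp contDiffOn_const
    have key : ∀ p ∈ U, HasFDerivAt (fun p => ∫ t in (0:ℝ)..1, F (p, t))
        (∫ t in (0:ℝ)..1, F' (p, t)) p := by
      intro p hp
      obtain ⟨C, s, hs, hsC⟩ := aux_bound hV hUV hF''.continuousOn hp
      refine intervalIntegral.hasFDerivAt_integral_of_dominated_of_fderiv_le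
        (F := fun p t => F (p, t)) (F' := fun p t => F' (p, t)) (bound := fun _ => C) hs
        ?_ ?_ ?_ ?_ intervalIntegrable_const ?_
      · filter_upwards [hs] with x hx
        exact aux_meas (aux_slice hF0 fun t ht => (hsC x hx t ht).1)
      · refine ContinuousOn.intervalIntegrable ?_
        rw [uIcc_of_le zero_le_one]
        exact aux_slice hF0 (hUV p hp)
      · exact aux_meas (aux_slice hF''.continuousOn (hUV p hp))
      · exact Eventually.of_forall fun t ht x hx => (hsC x hx t (aux_uIoc ht)).2
      · refine Eventually.of_forall fun t ht x hx => ?_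
        have h1 : HasFDerivAt F (fderiv ℝ F (x, t)) (x, t) :=
          (hd.differentiableAt (hV.mem_nhds (hsC x hx t (aux_uIoc ht)).1)).hasFDerivAt
        exact h1.comp x (hasFDerivAt_prodMk_left x t)
    rw [contDiffOn_succ_iff_fderiv_of_isOpen hU]
    refine ⟨fun p hp => (key p hp).differentiableAt.differentiableWithinAt, by simp, ?_⟩
    exact (ih hF'').congr fun p hp => (key p hp).fderiv


/-- **Hadamard-type lemma (cf. Milnor, Lemma 2.1), fibrewise version.**  Let
`U ⊆ ℂ^{n-1} × ℂ` be an open set star-shaped in the last variable, and let `a : U → ℂ` be a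
smooth function vanishing on the slice `{z_n = 0}`.  Then `a = A z_n + B z̄_n` for smooth
functions `A, B` on `U`. -/
theorem hadamard_decomposition {m : ℕ} (U : Set ((Fin m → ℂ) × ℂ))
    (hU : IsOpen U)
    (hstar : ∀ p ∈ U, ∀ t : ℝ, t ∈ Icc (0:ℝ) 1 → (p.1, (t : ℂ) * p.2) ∈ U)
    (a : (Fin m → ℂ) × ℂ → ℂ)
    (ha : ContDiffOn ℝ (⊤ : ℕ∞) a U)
    (hvanish : ∀ z' : Fin m → ℂ, ((z', (0:ℂ)) ∈ U) → a (z', 0) = 0) :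
    ∃ A B : (Fin m → ℂ) × ℂ → ℂ,
      ContDiffOn ℝ (⊤ : ℕ∞) A U ∧ ContDiffOn ℝ (⊤ : ℕ∞) B U ∧
      ∀ p ∈ U, a p = A p * p.2 + B p * (starRingEnd ℂ) p.2 := by
  let φ : ((Fin m → ℂ) × ℂ) × ℝ → (Fin m → ℂ) × ℂ := fun q => (q.1.1, (q.2 : ℂ) * q.1.2)
  have hφ : ContDiff ℝ (⊤ : ℕ∞) φ := by
    have : ContDiff ℝ (⊤ : ℕ∞) (fun q : ((Fin m → ℂ) × ℂ) × ℝ => (q.2 : ℂ)) :=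
      Complex.ofRealCLM.contDiff.comp contDiff_snd
    exact contDiff_fst.fst.prodMk (this.mul contDiff_fst.snd)
  have hV : IsOpen (φ ⁻¹' U) := hU.preimage hφ.continuous
  have hUV : ∀ p ∈ U, ∀ t ∈ Icc (0:ℝ) 1, (p, t) ∈ φ ⁻¹' U := fun p hp t ht => hstar p hp t ht
  obtain ⟨hd, ha'⟩ := (contDiffOn_infty_iff_fderiv_of_isOpen hU).1 ha
  let D : ℂ → ((Fin m → ℂ) × ℂ) × ℝ → ℂ := fun v q => fderiv ℝ a (φ q) (0, v)
  have hD : ∀ v, ContDiffOn ℝ (⊤ : ℕ∞) (D v) (φ ⁻¹' U) := fun v =>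
    (ha'.comp hφ.contDiffOn (fun _ h => h)).clm_apply contDiffOn_const
  let J : ℂ → (Fin m → ℂ) × ℂ → ℂ := fun v p => ∫ t in (0:ℝ)..1, D v (p, t)
  have hJ : ∀ v, ContDiffOn ℝ (⊤ : ℕ∞) (J v) U := fun v =>
    contDiffOn_infty.2 fun n => aux_contDiff n hU hV hUV (contDiffOn_infty.1 (hD v) n)
  have hint : ∀ v, ∀ p ∈ U, IntervalIntegrable (fun t => D v (p, t)) MeasureTheory.volume 0 1 := by
    intro v p hp
    refine ContinuousOn.intervalIntegrable ?_
    rw [uIcc_of_le zero_le_one]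
    exact aux_slice (hD v).continuousOn (hUV p hp)
  have hftc : ∀ p ∈ U, a p = J p.2 p := by
    intro p hp
    have h := intervalIntegral.integral_eq_sub_of_hasDerivAt (a := 0) (b := 1)
      (f := fun t : ℝ => a (φ (p, t))) (f' := fun t => D p.2 (p, t)) ?_ (hint p.2 p hp)
    · have h0 : a (p.1, 0) = 0 := by
        apply hvanish
        simpa using hstar p hp 0 (by simp)
      simp only [J, h]
      simp [φ, h0]
    · intro t ht
      rw [uIcc_of_le zero_le_one] at ht
      have h1 : HasFDerivAt a (fderiv ℝ a (φ (p, t))) (φ (p, t)) :=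
        (hd.differentiableAt (hU.mem_nhds (hUV p hp t ht))).hasFDerivAt
      have h2 : HasDerivAt (fun t : ℝ => φ (p, t)) (0, p.2) t := by
        refine (hasDerivAt_const t p.1).prodMk ?_
        simpa using (Complex.ofRealCLM.hasDerivAt (x := t)).mul_const p.2
      exact h1.comp_hasDerivAt t h2
  have hlin : ∀ p ∈ U, J p.2 p = p.2.re * J 1 p + p.2.im * J Complex.I p := by
    intro p hp
    have : ∀ t, D p.2 (p, t) = p.2.re * D 1 (p, t) + p.2.im * D Complex.I (p, t) := by
      intro t
      have e : ((0 : Fin m → ℂ), p.2) = p.2.re • ((0 : Fin m → ℂ), (1:ℂ))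
          + p.2.im • ((0 : Fin m → ℂ), Complex.I) := by
        ext <;> simp
      simp only [D]
      conv_lhs => rw [e, map_add, map_smul, map_smul]
      simp
    simp only [J, this]
    rw [intervalIntegral.integral_add ((hint 1 p hp).const_mul _)
      ((hint Complex.I p hp).const_mul _), intervalIntegral.integral_const_mul,
      intervalIntegral.integral_const_mul]
  refine ⟨fun p => (1/2 : ℂ) * (J 1 p - Complex.I * J Complex.I p),
    fun p => (1/2 : ℂ) * (J 1 p + Complex.I * J Complex.I p),
    contDiffOn_const.mul ((hJ 1).sub (contDiffOn_const.mul (hJ _))),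
    contDiffOn_const.mul ((hJ 1).add (contDiffOn_const.mul (hJ _))), fun p hp => ?_⟩
  rw [hftc p hp, hlin p hp]
  have e1 : p.2 = p.2.re + p.2.im * Complex.I := (Complex.re_add_im p.2).symm
  have e2 : (starRingEnd ℂ) p.2 = p.2.re - p.2.im * Complex.I := by
    apply Complex.ext <;> simp
  beta_reduce
  rw [e2]
  generalize J 1 p = x at *
  generalize J Complex.I p = y at *
  have e3 : (1/2 : ℂ) * (x - Complex.I * y) * p.2
      = (1/2 : ℂ) * (x - Complex.I * y) * (p.2.re + p.2.im * Complex.I) := by rw [← e1]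
  rw [e3]
  linear_combination ((p.2.im : ℂ) * y) * Complex.I_sq
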